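/- arXiv:1404.5999 — 2 statements merged into one kernel-verified Lean document; each statement's English description precedes it below -/
import Mathlib

section
/- Let n ≥ 1, let x ∈ [0,1], and let A, B be n×n complex positive semidefinite matrices. Then x·√A + (1−x)·√B ≤ √(x·A + (1−x)·B) in the Loewner (positive semidefinite) order; that is, √(x·A + (1−x)·B) − (x·√A + (1−x)·√B) is positive semidefinite. -/
open Matrix ComplexOrder

/-- Apply a real function to a Hermitian matrix via the spectral decomposition
`A = U D U*`: the result is `U (f(D)) U*` where `f` acts on the diagonal. -/
noncomputable def mfun {m : Type*} [Fintype m] [DecidableEq m]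
    (f : ℝ → ℝ) (A : Matrix m m ℂ) : Matrix m m ℂ :=
  if hA : A.IsHermitian then hA.cfc f else 0

/-- Matrix logarithm via spectral decomposition, with the convention `log 0 = 0`
(note `Real.log 0 = 0`). -/
noncomputable def matLog {m : Type*} [Fintype m] [DecidableEq m]
    (A : Matrix m m ℂ) : Matrix m m ℂ :=
  mfun Real.log A

/-- The positive semidefinite square root of a positive semidefinite matrix,
via spectral decomposition. -/
noncomputable def matSqrt {m : Type*} [Fintype m] [DecidableEq m]
    (A : Matrix m m ℂ) : Matrix m m ℂ :=
  mfun Real.sqrt A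

/-- Real power of a (positive semidefinite / positive definite) matrix via spectral
decomposition. -/
noncomputable def matRpow {m : Type*} [Fintype m] [DecidableEq m]
    (t : ℝ) (A : Matrix m m ℂ) : Matrix m m ℂ :=
  mfun (fun u => u ^ t) A

/-- The von Neumann entropy `S(ρ) = -Tr(ρ log ρ)`. -/
noncomputable def vnEntropy {m : Type*} [Fintype m] [DecidableEq m]
    (ρ : Matrix m m ℂ) : ℝ :=
  -(Matrix.trace (ρ * matLog ρ)).re

/-- The quantum relative entropy `H(ρ, γ) = Tr(ρ (log ρ - log γ))`. -/
noncomputable def relEntropy {m : Type*} [Fintype m] [DecidableEq m]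
    (ρ γ : Matrix m m ℂ) : ℝ :=
  (Matrix.trace (ρ * (matLog ρ - matLog γ))).re

/-- The trace norm of a Hermitian matrix: the sum of the absolute values of its
eigenvalues. -/
noncomputable def traceNorm {m : Type*} [Fintype m] [DecidableEq m]
    (A : Matrix m m ℂ) : ℝ :=
  if hA : A.IsHermitian then ∑ i, |hA.eigenvalues i| else 0

/-- A density matrix: positive semidefinite with trace 1. -/
def IsDensity {m : Type*} [Fintype m] [DecidableEq m] (ρ : Matrix m m ℂ) : Prop :=
  ρ.PosSemidef ∧ Matrix.trace ρ = 1

/-- The binary entropy `h(x) = -x log x - (1-x) log (1-x)`. -/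
noncomputable def binEntropy (x : ℝ) : ℝ :=
  -(x * Real.log x) - (1 - x) * Real.log (1 - x)

/-- The Renyi relative entropy `H_a(ρ,γ) = (a-1)⁻¹ log Tr(ρ^a γ^(1-a))`. -/
noncomputable def renyiRel {m : Type*} [Fintype m] [DecidableEq m]
    (a : ℝ) (ρ γ : Matrix m m ℂ) : ℝ :=
  (a - 1)⁻¹ * Real.log (Matrix.trace (matRpow a ρ * matRpow (1 - a) γ)).re

/-- The sandwiched Renyi relative entropy
`H̃_a(ρ,γ) = (a-1)⁻¹ log Tr((γ^((1-a)/(2a)) ρ γ^((1-a)/(2a)))^a)`. -/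
noncomputable def sandRenyiRel {m : Type*} [Fintype m] [DecidableEq m]
    (a : ℝ) (ρ γ : Matrix m m ℂ) : ℝ :=
  (a - 1)⁻¹ * Real.log
    (Matrix.trace (matRpow a
      (matRpow ((1 - a) / (2 * a)) γ * ρ * matRpow ((1 - a) / (2 * a)) γ))).re

section

open scoped MatrixOrder Matrix.Norms.L2Operator

variable {m : Type*} [Fintype m] [DecidableEq m]

theorem mfun_eq_cfc (f : ℝ → ℝ) (A : Matrix m m ℂ) : mfun f A = cfc f A := by
  by_cases hA : A.IsHermitian
  · rw [mfun, dif_pos hA, hA.cfc_eq]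
  · exact (dif_neg hA).trans (cfc_apply_of_not_predicate A hA).symm

theorem matSqrt_eq_cfcSqrt {A : Matrix m m ℂ} (hA : 0 ≤ A) : matSqrt A = CFC.sqrt A := by
  rw [matSqrt, mfun_eq_cfc, CFC.sqrt_eq_real_sqrt A hA, cfcₙ_eq_cfc]

theorem sqrt_concave_loewner_general :
    ConcaveOn ℝ (Set.Ici 0) (matSqrt : Matrix m m ℂ → Matrix m m ℂ) :=
  CFC.concaveOn_sqrt.congr fun _ hA ↦ (matSqrt_eq_cfcSqrt hA).symm

end

theorem sqrt_concave_loewner (n : ℕ) (hn : 1 ≤ n) (x : ℝ) (hx : x ∈ Set.Icc (0:ℝ) 1)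
    (A B : Matrix (Fin n) (Fin n) ℂ) (hA : A.PosSemidef) (hB : B.PosSemidef) :
    (matSqrt (x • A + (1 - x) • B) - (x • matSqrt A + (1 - x) • matSqrt B)).PosSemidef := by
  rw [← Matrix.le_iff]
  exact sqrt_concave_loewner_general.2 hA.nonneg hB.nonneg hx.1
    (sub_nonneg.2 hx.2) (add_sub_cancel x 1)
end

section
/- Let n ≥ 1, let x ∈ (0,1), and let ρ₁, ρ₂ be density matrices (n×n complex positive semidefinite matrices of trace 1), and set ρ_Av := x·ρ₁ + (1−x)·ρ₂. Then S(ρ_Av) − x·S(ρ₁) − (1−x)·S(ρ₂) ≥ 2·x²·(1−x)²·‖ρ₁ − ρ₂‖₁². -/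
open Matrix ComplexOrder

/-!
Concavity of the entropy is measured by relative entropies to the average:
`S(aρ + bτ) - a S(ρ) - b S(τ) = a H(ρ, aρ + bτ) + b H(τ, aρ + bτ)`. Each term on the right is
bounded below by the quantum Pinsker inequality `‖ρ - γ‖₁² ≤ 2 H(ρ, γ)`.

To prove the latter, let `uᵢ`, `vⱼ` be eigenbases of `ρ` and `γ` with eigenvalues `pᵢ`, `qⱼ`. Then
`H(ρ, γ) - Tr ρ + Tr γ = ∑ᵢⱼ (pᵢ log pᵢ - pᵢ log qⱼ - pᵢ + qⱼ) |⟨uᵢ, vⱼ⟩|²`, while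
`‖ρ - γ‖₁ = Tr (W (ρ - γ)) = ∑ᵢⱼ (pᵢ - qⱼ) ⟨uᵢ, vⱼ⟩ ⟨vⱼ, W uᵢ⟩` for a unitary `W`. The scalar
inequality `3 (p - q)² ≤ 2 (p + 2q) (p log p - p log q - p + q)` and the Cauchy–Schwarz inequality
compare the two, because the weights `|⟨vⱼ, W uᵢ⟩|²` are doubly stochastic.
-/

section Scalar

open InformationTheory

lemma three_mul_sub_one_sq_le_klFun {u : ℝ} (hu : 0 ≤ u) :
    3 * (u - 1) ^ 2 ≤ 2 * (u + 2) * klFun u := by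
  let g : ℝ → ℝ := fun v => 2 * (v + 2) * klFun v - 3 * (v - 1) ^ 2
  let g' : ℝ → ℝ := fun v => 4 * ((v + 1) * Real.log v - 2 * (v - 1))
  have hg {v : ℝ} (hv : v ≠ 0) : HasDerivAt g (g' v) v := by
    have h := (((hasDerivAt_id v).add_const 2).const_mul 2).mul (hasDerivAt_klFun hv)
      |>.sub ((((hasDerivAt_id v).sub_const 1).pow 2).const_mul 3)
    refine h.congr_deriv ?_
    simp only [id_eq, klFun_apply, g']
    ring
  have hg' {v : ℝ} (hv : v ≠ 0) : HasDerivAt g' (4 * (Real.log v - (1 - v⁻¹))) v := by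
    have h := ((((hasDerivAt_id v).add_const 1).mul (Real.hasDerivAt_log hv)).sub
      (((hasDerivAt_id v).sub_const 1).const_mul 2)).const_mul 4
    refine h.congr_deriv ?_
    simp only [id_eq]
    field_simp
    ring
  have hconv : ConvexOn ℝ (Set.Ici 0) g := by
    refine convexOn_of_hasDerivWithinAt2_nonneg (convex_Ici 0) (by fun_prop)
      (f' := g') (f'' := fun v => 4 * (Real.log v - (1 - v⁻¹))) ?_ ?_ ?_ <;>
      intro v hv <;> rw [interior_Ici] at hv
    · exact (hg hv.ne').hasDerivWithinAt
    · exact (hg' hv.ne').hasDerivWithinAt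
    · have := Real.one_sub_inv_le_log_of_pos hv
      linarith
  have hmin : IsMinOn g (Set.Ici 0) 1 :=
    hconv.isMinOn_of_rightDeriv_eq_zero (by simp) <| by
      simpa [g'] using (hg one_ne_zero).hasDerivWithinAt.derivWithin (uniqueDiffWithinAt_Ioi 1)
  have := hmin hu
  simp only [Set.mem_ofPred_eq, g, klFun_one] at this
  linarith

/-- The summand of the relative entropy of two nonnegative, not necessarily normalised, vectors.
The linear correction `- p + q` makes it nonnegative. Since `Real.log 0 = 0`, its value at `q = 0`
is meaningful only for `p = 0`; classically it is `∞` for `p > 0`. -/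
noncomputable def klTerm (p q : ℝ) : ℝ :=
  p * Real.log p - p * Real.log q - p + q

lemma klTerm_eq_mul_klFun (p : ℝ) {q : ℝ} (hq : q ≠ 0) : klTerm p q = q * klFun (p / q) := by
  rcases eq_or_ne p 0 with rfl | hp
  · simp [klTerm, klFun_zero]
  · rw [klTerm, klFun_apply, Real.log_div hp hq]
    field_simp
    ring

lemma klTerm_nonneg {p q : ℝ} (hp : 0 ≤ p) (hq : 0 ≤ q) (h : q = 0 → p = 0) :
    0 ≤ klTerm p q := by
  rcases eq_or_ne q 0 with rfl | hq0
  · simp [klTerm, h rfl]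
  · rw [klTerm_eq_mul_klFun p hq0]
    exact mul_nonneg hq (klFun_nonneg (div_nonneg hp hq))

lemma three_mul_sub_sq_le_klTerm {p q : ℝ} (hp : 0 ≤ p) (hq : 0 ≤ q) (h : q = 0 → p = 0) :
    3 * (p - q) ^ 2 ≤ 2 * (p + 2 * q) * klTerm p q := by
  rcases eq_or_ne q 0 with rfl | hq0
  · simp [h rfl]
  · calc 3 * (p - q) ^ 2 = q ^ 2 * (3 * (p / q - 1) ^ 2) := by field_simp
      _ ≤ q ^ 2 * (2 * (p / q + 2) * klFun (p / q)) := by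
          gcongr q ^ 2 * ?_
          exact three_mul_sub_one_sq_le_klFun (div_nonneg hp hq)
      _ = 2 * (p + 2 * q) * klTerm p q := by
          rw [klTerm_eq_mul_klFun p hq0]
          field_simp

lemma three_mul_sum_mul_abs_sub_mul_sq_le {ι : Type*} {s : Finset ι} {p q : ι → ℝ} (k m : ι → ℝ)
    (hp : ∀ i ∈ s, 0 ≤ p i) (hq : ∀ i ∈ s, 0 ≤ q i)
    (h : ∀ i ∈ s, q i = 0 → p i = 0 ∨ m i = 0) :
    3 * (∑ i ∈ s, k i * |p i - q i| * m i) ^ 2 ≤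
      2 * (∑ i ∈ s, (p i + 2 * q i) * k i ^ 2) * ∑ i ∈ s, klTerm (p i) (q i) * m i ^ 2 := by
  have key := Finset.sum_sq_le_sum_mul_sum_of_sq_le_mul s
    (r := fun i => k i * |p i - q i| * m i)
    (f := fun i => (p i + 2 * q i) * k i ^ 2)
    (g := fun i => 2 / 3 * (klTerm (p i) (q i) * m i ^ 2)) ?_ ?_ ?_
  · rw [← Finset.mul_sum] at key
    linarith
  · intro i hi
    have := hp i hi
    have := hq i hi
    positivity
  · intro i hi
    rcases eq_or_ne (m i) 0 with hm | hm
    · simp [hm]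
    · have := klTerm_nonneg (hp i hi) (hq i hi) fun h0 => (h i hi h0).resolve_right hm
      positivity
  · intro i hi
    rcases eq_or_ne (m i) 0 with hm | hm
    · simp [hm]
    · have := three_mul_sub_sq_le_klTerm (hp i hi) (hq i hi)
        fun h0 => (h i hi h0).resolve_right hm
      calc (k i * |p i - q i| * m i) ^ 2 = (k i * m i) ^ 2 / 3 * (3 * (p i - q i) ^ 2) := by
            rw [mul_pow, mul_pow, sq_abs]
            ring
        _ ≤ (k i * m i) ^ 2 / 3 * (2 * (p i + 2 * q i) * klTerm (p i) (q i)) := by gcongr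
        _ = _ := by ring

end Scalar

lemma trace_diagonal_mul_mul_diagonal_mul_conjTranspose {𝕜 l m : Type*} [RCLike 𝕜] [Fintype l]
    [Fintype m] [DecidableEq l] [DecidableEq m] (a : l → 𝕜) (b : m → 𝕜) (M : Matrix l m 𝕜) :
    trace (diagonal a * M * diagonal b * Mᴴ) = ∑ i, ∑ j, a i * b j * ‖M i j‖ ^ 2 := by
  simp only [trace, diag_apply, Matrix.mul_apply (N := Mᴴ), mul_diagonal, diagonal_mul,
    conjTranspose_apply, ← RCLike.mul_conj, starRingEnd_apply]
  exact Finset.sum_congr rfl fun i _ => Finset.sum_congr rfl fun j _ => by ring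

lemma mulVec_eq_zero_of_add_mulVec_eq_zero {𝕜 m : Type*} [RCLike 𝕜] [Fintype m]
    {A B : Matrix m m 𝕜} (hA : A.PosSemidef) (hB : B.PosSemidef) {v : m → 𝕜}
    (h : (A + B) *ᵥ v = 0) : A *ᵥ v = 0 := by
  rw [← hA.dotProduct_mulVec_zero_iff]
  have hsum : star v ⬝ᵥ A *ᵥ v + star v ⬝ᵥ B *ᵥ v = 0 := by
    rw [← dotProduct_add, ← add_mulVec, h, dotProduct_zero]
  exact ((add_eq_zero_iff_of_nonneg (hA.dotProduct_mulVec_nonneg v)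
    (hB.dotProduct_mulVec_nonneg v)).1 hsum).1

section Unitary

variable {𝕜 m : Type*} [RCLike 𝕜] [Fintype m] [DecidableEq m]

lemma sum_norm_sq_row_of_mem_unitaryGroup {U : Matrix m m 𝕜} (hU : U ∈ unitaryGroup m 𝕜) (i : m) :
    ∑ j, ‖U i j‖ ^ 2 = 1 := by
  have h : (U * Uᴴ) i i = 1 := by
    rw [← star_eq_conjTranspose, mem_unitaryGroup_iff.1 hU, one_apply_eq]
  simp only [Matrix.mul_apply, conjTranspose_apply, ← starRingEnd_apply, RCLike.mul_conj] at h
  exact_mod_cast h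

lemma sum_norm_sq_col_of_mem_unitaryGroup {U : Matrix m m 𝕜} (hU : U ∈ unitaryGroup m 𝕜) (j : m) :
    ∑ i, ‖U i j‖ ^ 2 = 1 := by
  simpa using sum_norm_sq_row_of_mem_unitaryGroup (Unitary.star_mem hU) j

lemma sum_add_mul_norm_sq_of_mem_unitaryGroup {U : Matrix m m 𝕜} (hU : U ∈ unitaryGroup m 𝕜)
    (a b : m → ℝ) : ∑ i, ∑ j, (a i + b j) * ‖U i j‖ ^ 2 = ∑ i, a i + ∑ j, b j := by
  simp only [add_mul, Finset.sum_add_distrib]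
  congr 1
  · simp only [← Finset.mul_sum, sum_norm_sq_row_of_mem_unitaryGroup hU, mul_one]
  · rw [Finset.sum_comm]
    simp only [← Finset.mul_sum, sum_norm_sq_col_of_mem_unitaryGroup hU, mul_one]

end Unitary

section Hermitian

variable {𝕜 m : Type*} [RCLike 𝕜] [Fintype m] [DecidableEq m] {A B : Matrix m m 𝕜}

/-- The change-of-basis matrix between the eigenbases of two Hermitian matrices: its `(i, j)` entry
is the inner product of the `i`-th eigenvector of `A` with the `j`-th eigenvector of `B`. -/
noncomputable def eigenvectorOverlap (hA : A.IsHermitian) (hB : B.IsHermitian) : Matrix m m 𝕜 :=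
  star (hA.eigenvectorUnitary : Matrix m m 𝕜) * hB.eigenvectorUnitary

lemma cfc_eq_eigenvectorUnitary_mul (hA : A.IsHermitian) (f : ℝ → ℝ) :
    cfc f A = (hA.eigenvectorUnitary : Matrix m m 𝕜) *
      diagonal (fun i => (f (hA.eigenvalues i) : 𝕜)) *
        star (hA.eigenvectorUnitary : Matrix m m 𝕜) := by
  rw [hA.cfc_eq]
  rfl

lemma trace_cfc (hA : A.IsHermitian) (f : ℝ → ℝ) :
    trace (cfc f A) = ∑ i, (f (hA.eigenvalues i) : 𝕜) := by
  rw [cfc_eq_eigenvectorUnitary_mul hA, trace_mul_cycle, Unitary.coe_star_mul_self,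
    Matrix.one_mul, trace_diagonal]

lemma re_trace_cfc_mul_cfc (hA : A.IsHermitian) (hB : B.IsHermitian) (f g : ℝ → ℝ) :
    RCLike.re (trace (cfc f A * cfc g B)) = ∑ i, ∑ j, f (hA.eigenvalues i) *
      g (hB.eigenvalues j) * ‖eigenvectorOverlap hA hB i j‖ ^ 2 := by
  have h : trace (cfc f A * cfc g B) = ∑ i, ∑ j, (f (hA.eigenvalues i) : 𝕜) *
      g (hB.eigenvalues j) * ‖eigenvectorOverlap hA hB i j‖ ^ 2 := by
    rw [← trace_diagonal_mul_mul_diagonal_mul_conjTranspose, cfc_eq_eigenvectorUnitary_mul hA,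
      cfc_eq_eigenvectorUnitary_mul hB, eigenvectorOverlap]
    simp only [star_eq_conjTranspose, conjTranspose_mul, conjTranspose_conjTranspose,
      Matrix.mul_assoc]
    rw [trace_mul_comm]
    simp only [Matrix.mul_assoc]
  rw [h]
  exact_mod_cast RCLike.ofReal_re (K := 𝕜) _

lemma star_eigenvectorUnitary_mul (hA : A.IsHermitian) :
    star (hA.eigenvectorUnitary : Matrix m m 𝕜) * A =
      diagonal (fun i => (hA.eigenvalues i : 𝕜)) * star (hA.eigenvectorUnitary : Matrix m m 𝕜) := by
  have h := cfc_eq_eigenvectorUnitary_mul hA id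
  rw [cfc_id ℝ A hA.isSelfAdjoint] at h
  calc star (hA.eigenvectorUnitary : Matrix m m 𝕜) * A = _ := congrArg _ h
    _ = _ := by simp [← Matrix.mul_assoc]

lemma mul_eigenvectorUnitary (hA : A.IsHermitian) :
    A * (hA.eigenvectorUnitary : Matrix m m 𝕜) =
      (hA.eigenvectorUnitary : Matrix m m 𝕜) * diagonal (fun i => (hA.eigenvalues i : 𝕜)) := by
  simpa [star_eq_conjTranspose, hA.eq, diagonal_conjTranspose, Pi.star_def] using
    congrArg star (star_eigenvectorUnitary_mul hA)

lemma star_eigenvectorUnitary_mul_sub_mul_apply (hA : A.IsHermitian) (hB : B.IsHermitian)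
    (i j : m) :
    (star (hA.eigenvectorUnitary : Matrix m m 𝕜) * (A - B) * hB.eigenvectorUnitary) i j =
      (hA.eigenvalues i - hB.eigenvalues j) * eigenvectorOverlap hA hB i j := by
  rw [Matrix.mul_sub, Matrix.sub_mul, star_eigenvectorUnitary_mul, Matrix.mul_assoc _ B,
    mul_eigenvectorUnitary, Matrix.mul_assoc, ← Matrix.mul_assoc _ _ (diagonal _)]
  simp only [eigenvectorOverlap, Matrix.sub_apply, diagonal_mul, mul_diagonal]
  ring

lemma trace_mul_sub_eq_sum (hA : A.IsHermitian) (hB : B.IsHermitian) (W : Matrix m m 𝕜) :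
    trace (W * (A - B)) = ∑ i, ∑ j, (hA.eigenvalues i - hB.eigenvalues j : 𝕜) *
      eigenvectorOverlap hA hB i j *
      (star (hB.eigenvectorUnitary : Matrix m m 𝕜) * W * hA.eigenvectorUnitary) j i := by
  set U := (hA.eigenvectorUnitary : Matrix m m 𝕜)
  set V := (hB.eigenvectorUnitary : Matrix m m 𝕜)
  have h : trace (W * (A - B)) = trace (star U * (A - B) * V * (star V * W * U)) := by
    calc trace (W * (A - B)) = trace ((V * star V) * W * (U * star U) * (A - B)) := by
          simp [U, V]
      _ = trace (V * (star V * W * U * star U * (A - B))) := by simp only [Matrix.mul_assoc]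
      _ = trace ((star V * W * U) * (star U * (A - B) * V)) := by
          rw [trace_mul_comm]
          simp only [Matrix.mul_assoc]
      _ = _ := trace_mul_comm ..
  rw [h, trace]
  simp only [diag_apply, Matrix.mul_apply (N := star V * W * U), U, V,
    star_eigenvectorUnitary_mul_sub_mul_apply]

lemma norm_trace_mul_sub_le (hA : A.IsHermitian) (hB : B.IsHermitian) (W : Matrix m m 𝕜) :
    ‖trace (W * (A - B))‖ ≤ ∑ i, ∑ j,
      ‖(star (hB.eigenvectorUnitary : Matrix m m 𝕜) * W * hA.eigenvectorUnitary) j i‖ *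
        |hA.eigenvalues i - hB.eigenvalues j| * ‖eigenvectorOverlap hA hB i j‖ := by
  rw [trace_mul_sub_eq_sum hA hB]
  refine norm_sum_le_of_le _ fun i _ => norm_sum_le_of_le _ fun j _ => le_of_eq ?_
  rw [norm_mul, norm_mul, ← RCLike.ofReal_sub, RCLike.norm_ofReal]
  ring

lemma eigenvalues_mul_eigenvectorOverlap_apply (hA : A.IsHermitian) (hB : B.IsHermitian) (i j : m) :
    hA.eigenvalues i * eigenvectorOverlap hA hB i j =
      (star (hA.eigenvectorUnitary : Matrix m m 𝕜) *ᵥ (A *ᵥ hB.eigenvectorBasis j)) i := by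
  rw [mulVec_mulVec, star_eigenvectorUnitary_mul, ← hB.eigenvectorUnitary_mulVec, mulVec_mulVec,
    mulVec_single_one, Matrix.mul_assoc]
  simp [eigenvectorOverlap, col]

lemma eigenvalue_eq_zero_or_eigenvectorOverlap_eq_zero (hA : A.IsHermitian) (hB : B.IsHermitian)
    (h : ∀ v, B *ᵥ v = 0 → A *ᵥ v = 0) {j : m} (hj : hB.eigenvalues j = 0) (i : m) :
    hA.eigenvalues i = 0 ∨ eigenvectorOverlap hA hB i j = 0 := by
  have hv : A *ᵥ hB.eigenvectorBasis j = 0 :=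
    h _ (by rw [hB.mulVec_eigenvectorBasis, hj, zero_smul])
  have h0 := eigenvalues_mul_eigenvectorOverlap_apply hA hB i j
  rw [hv, mulVec_zero, Pi.zero_apply] at h0
  simpa using h0

end Hermitian

section Entropy

variable {m : Type*} [Fintype m] [DecidableEq m] {A ρ τ γ : Matrix m m ℂ}

lemma matLog_eq_cfc (hA : A.IsHermitian) : matLog A = cfc Real.log A := by
  rw [matLog, mfun, dif_pos hA, hA.cfc_eq]

lemma traceNorm_eq_trace_cfc_abs (hA : A.IsHermitian) :
    (traceNorm A : ℂ) = trace (cfc (|·| : ℝ → ℝ) A) := by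
  rw [traceNorm, dif_pos hA, trace_cfc hA, Complex.ofReal_sum]
  rfl

lemma traceNorm_smul (hA : A.IsHermitian) (c : ℝ) : traceNorm (c • A) = |c| * traceNorm A := by
  have hcA : (c • A).IsHermitian := hA.smul (IsSelfAdjoint.all c)
  apply Complex.ofReal_injective
  calc (traceNorm (c • A) : ℂ) = trace (cfc (fun t : ℝ => |c * t|) A) := by
        rw [traceNorm_eq_trace_cfc_abs hcA, ← cfc_comp_const_mul c _ A]
    _ = trace (|c| • cfc (|·| : ℝ → ℝ) A) := by
        simp only [abs_mul]
        rw [cfc_const_mul |c| _ A]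
    _ = (|c| * traceNorm A : ℝ) := by
        rw [trace_smul, ← traceNorm_eq_trace_cfc_abs hA, Complex.real_smul, Complex.ofReal_mul]

lemma traceNorm_sub_comm (hρ : ρ.IsHermitian) (hτ : τ.IsHermitian) :
    traceNorm (ρ - τ) = traceNorm (τ - ρ) := by
  simpa using traceNorm_smul (hτ.sub hρ) (-1)

lemma exists_mem_unitaryGroup_trace_mul_eq_traceNorm (hA : A.IsHermitian) :
    ∃ W ∈ unitaryGroup m ℂ, trace (W * A) = traceNorm A := by
  let s : ℝ → ℝ := fun t => if 0 ≤ t then 1 else -1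
  have hs : ContinuousOn s (spectrum ℝ A) := A.finite_real_spectrum.continuousOn s
  refine ⟨cfc s A, (cfc_unitary_iff s A).2 fun t _ => ?_, ?_⟩
  · by_cases ht : 0 ≤ t <;> simp [s, ht]
  · have h : cfc (|·| : ℝ → ℝ) A = cfc s A * A := by
      calc cfc (|·| : ℝ → ℝ) A = cfc (fun t => s t * t) A := by
            refine cfc_congr fun t _ => ?_
            by_cases ht : 0 ≤ t
            · simp [s, ht, abs_of_nonneg]
            · simp [s, ht, abs_of_neg (not_le.1 ht)]
        _ = cfc s A * A := by rw [cfc_mul s _ A hs, cfc_id' ℝ A]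
    rw [traceNorm_eq_trace_cfc_abs hA, h]

lemma relEntropy_sub_trace_add_trace_eq_sum (hρ : ρ.IsHermitian) (hγ : γ.IsHermitian) :
    relEntropy ρ γ - (trace ρ).re + (trace γ).re =
      ∑ i, ∑ j, klTerm (hρ.eigenvalues i) (hγ.eigenvalues j) *
        ‖eigenvectorOverlap hρ hγ i j‖ ^ 2 := by
  have hρlog : ρ * matLog ρ = cfc (fun t => t * Real.log t) ρ * cfc (1 : ℝ → ℝ) γ := by
    rw [cfc_mul (fun t => t) Real.log ρ continuousOn_id (ρ.finite_real_spectrum.continuousOn _),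
      cfc_id' ℝ ρ, cfc_one ℝ γ, matLog_eq_cfc hρ, mul_one]
  have hγlog : ρ * matLog γ = cfc (id : ℝ → ℝ) ρ * cfc Real.log γ := by
    rw [cfc_id ℝ ρ, matLog_eq_cfc hγ]
  have hρ_id : ρ = cfc (id : ℝ → ℝ) ρ * cfc (1 : ℝ → ℝ) γ := by
    rw [cfc_id ℝ ρ, cfc_one ℝ γ, mul_one]
  have hγ_id : γ = cfc (1 : ℝ → ℝ) ρ * cfc (id : ℝ → ℝ) γ := by
    rw [cfc_id ℝ γ, cfc_one ℝ ρ, one_mul]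
  have htr (f g : ℝ → ℝ) : (trace (cfc f ρ * cfc g γ)).re = ∑ i, ∑ j,
      f (hρ.eigenvalues i) * g (hγ.eigenvalues j) * ‖eigenvectorOverlap hρ hγ i j‖ ^ 2 :=
    re_trace_cfc_mul_cfc hρ hγ f g
  rw [relEntropy, Matrix.mul_sub, trace_sub, Complex.sub_re, hρlog, hγlog, congrArg trace hρ_id,
    congrArg trace hγ_id, htr, htr, htr, htr]
  simp only [← Finset.sum_sub_distrib, ← Finset.sum_add_distrib, klTerm, id, Pi.one_apply]
  exact Finset.sum_congr rfl fun i _ => Finset.sum_congr rfl fun j _ => by ring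

lemma sum_eigenvalues_add_mul_norm_sq (hρ : ρ.IsHermitian) (hγ : γ.IsHermitian)
    {N : Matrix m m ℂ} (hN : N ∈ unitaryGroup m ℂ) :
    ∑ i, ∑ j, (hρ.eigenvalues i + 2 * hγ.eigenvalues j) * ‖N j i‖ ^ 2 =
      (trace ρ).re + 2 * (trace γ).re := by
  rw [Finset.sum_comm]
  simp only [add_comm (hρ.eigenvalues _),
    sum_add_mul_norm_sq_of_mem_unitaryGroup hN fun j => 2 * hγ.eigenvalues j]
  rw [hρ.trace_eq_sum_eigenvalues, hγ.trace_eq_sum_eigenvalues, ← Finset.mul_sum]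
  simp [add_comm]

lemma three_mul_norm_trace_mul_sub_sq_le (hρ : ρ.PosSemidef) (hγ : γ.PosSemidef)
    (hker : ∀ v, γ *ᵥ v = 0 → ρ *ᵥ v = 0) {W : Matrix m m ℂ} (hW : W ∈ unitaryGroup m ℂ) :
    3 * ‖trace (W * (ρ - γ))‖ ^ 2 ≤
      2 * ((trace ρ).re + 2 * (trace γ).re) *
        (relEntropy ρ γ - (trace ρ).re + (trace γ).re) := by
  have hN := mul_mem (mul_mem (Unitary.star_mem hγ.1.eigenvectorUnitary.2) hW)
    hρ.1.eigenvectorUnitary.2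
  have hcs := three_mul_sum_mul_abs_sub_mul_sq_le (s := (Finset.univ : Finset (m × m)))
    (p := fun x => hρ.1.eigenvalues x.1) (q := fun x => hγ.1.eigenvalues x.2)
    (fun x =>
      ‖(star (hγ.1.eigenvectorUnitary : Matrix m m ℂ) * W * hρ.1.eigenvectorUnitary) x.2 x.1‖)
    (fun x => ‖eigenvectorOverlap hρ.1 hγ.1 x.1 x.2‖)
    (fun x _ => hρ.eigenvalues_nonneg x.1) (fun x _ => hγ.eigenvalues_nonneg x.2)
    fun x _ h0 => (eigenvalue_eq_zero_or_eigenvectorOverlap_eq_zero hρ.1 hγ.1 hker h0 x.1).imp_right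
      norm_eq_zero.2
  simp only [Fintype.sum_prod_type] at hcs
  rw [sum_eigenvalues_add_mul_norm_sq hρ.1 hγ.1 hN,
    ← relEntropy_sub_trace_add_trace_eq_sum hρ.1 hγ.1] at hcs
  refine le_trans ?_ hcs
  gcongr
  exact norm_trace_mul_sub_le hρ.1 hγ.1 W

lemma three_mul_traceNorm_sub_sq_le_relEntropy (hρ : ρ.PosSemidef) (hγ : γ.PosSemidef)
    (hker : ∀ v, γ *ᵥ v = 0 → ρ *ᵥ v = 0) :
    3 * traceNorm (ρ - γ) ^ 2 ≤
      2 * ((trace ρ).re + 2 * (trace γ).re) *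
        (relEntropy ρ γ - (trace ρ).re + (trace γ).re) := by
  obtain ⟨W, hW, htrace⟩ := exists_mem_unitaryGroup_trace_mul_eq_traceNorm (hρ.1.sub hγ.1)
  simpa [htrace] using three_mul_norm_trace_mul_sub_sq_le hρ hγ hker hW

lemma traceNorm_sub_sq_le_two_mul_relEntropy (hρ : IsDensity ρ) (hγ : IsDensity γ)
    (hker : ∀ v, γ *ᵥ v = 0 → ρ *ᵥ v = 0) :
    traceNorm (ρ - γ) ^ 2 ≤ 2 * relEntropy ρ γ := by
  have h := three_mul_traceNorm_sub_sq_le_relEntropy hρ.1 hγ.1 hker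
  simp only [hρ.2, hγ.2, Complex.one_re] at h
  linarith

lemma convex_setOf_isDensity : Convex ℝ {ρ : Matrix m m ℂ | IsDensity ρ} := by
  intro ρ hρ τ hτ a b ha hb hab
  refine ⟨(hρ.1.smul ha).add (hτ.1.smul hb), ?_⟩
  rw [trace_add, trace_smul, trace_smul, hρ.2, hτ.2, ← add_smul, hab, one_smul]

lemma vnEntropy_smul_add_smul_sub (ρ τ : Matrix m m ℂ) (a b : ℝ) :
    vnEntropy (a • ρ + b • τ) - a * vnEntropy ρ - b * vnEntropy τ =
      a * relEntropy ρ (a • ρ + b • τ) + b * relEntropy τ (a • ρ + b • τ) := by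
  simp only [vnEntropy, relEntropy, Matrix.mul_sub, Matrix.add_mul, Matrix.smul_mul, trace_sub,
    trace_add, trace_smul, Complex.sub_re, Complex.add_re, Complex.smul_re, smul_eq_mul]
  ring

lemma sq_mul_traceNorm_sub_sq_le_two_mul_relEntropy {x : ℝ} (hx : x ∈ Set.Ioc 0 1)
    (hρ : IsDensity ρ) (hτ : IsDensity τ) :
    (1 - x) ^ 2 * traceNorm (ρ - τ) ^ 2 ≤ 2 * relEntropy ρ (x • ρ + (1 - x) • τ) := by
  have hker (v : m → ℂ) (hv : (x • ρ + (1 - x) • τ) *ᵥ v = 0) : ρ *ᵥ v = 0 := by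
    have := mulVec_eq_zero_of_add_mulVec_eq_zero (hρ.1.smul hx.1.le)
      (hτ.1.smul (sub_nonneg.2 hx.2)) hv
    rwa [smul_mulVec, smul_eq_zero_iff_right hx.1.ne'] at this
  calc (1 - x) ^ 2 * traceNorm (ρ - τ) ^ 2 = traceNorm ((1 - x) • (ρ - τ)) ^ 2 := by
        rw [traceNorm_smul (hρ.1.1.sub hτ.1.1), mul_pow, sq_abs]
    _ = traceNorm (ρ - (x • ρ + (1 - x) • τ)) ^ 2 := by
        congr 2
        module
    _ ≤ _ := traceNorm_sub_sq_le_two_mul_relEntropy hρ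
        (convex_setOf_isDensity hρ hτ hx.1.le (sub_nonneg.2 hx.2) (by ring)) hker

end Entropy

theorem concavity_lower_bound_weak_pinsker_general {m : Type*} [Fintype m] [DecidableEq m] {x : ℝ}
    (hx : x ∈ Set.Ioo 0 1) {ρ τ : Matrix m m ℂ} (hρ : IsDensity ρ) (hτ : IsDensity τ) :
    x * (1 - x) / 2 * traceNorm (ρ - τ) ^ 2 ≤
      vnEntropy (x • ρ + (1 - x) • τ) - x * vnEntropy ρ - (1 - x) * vnEntropy τ := by
  have hρσ := sq_mul_traceNorm_sub_sq_le_two_mul_relEntropy ⟨hx.1, hx.2.le⟩ hρ hτ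
  have hτσ : x ^ 2 * traceNorm (ρ - τ) ^ 2 ≤ 2 * relEntropy τ (x • ρ + (1 - x) • τ) := by
    have h := sq_mul_traceNorm_sub_sq_le_two_mul_relEntropy
      ⟨sub_pos.2 hx.2, sub_le_self 1 hx.1.le⟩ hτ hρ
    rwa [sub_sub_cancel, add_comm, traceNorm_sub_comm hτ.1.1 hρ.1.1] at h
  calc x * (1 - x) / 2 * traceNorm (ρ - τ) ^ 2
      = x / 2 * ((1 - x) ^ 2 * traceNorm (ρ - τ) ^ 2) +
          (1 - x) / 2 * (x ^ 2 * traceNorm (ρ - τ) ^ 2) := by ring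
    _ ≤ x / 2 * (2 * relEntropy ρ (x • ρ + (1 - x) • τ)) +
          (1 - x) / 2 * (2 * relEntropy τ (x • ρ + (1 - x) • τ)) := by
        have := hx.1
        have := sub_pos.2 hx.2
        gcongr
    _ = _ := by
        rw [vnEntropy_smul_add_smul_sub]
        ring

theorem concavity_lower_bound_weak_pinsker (n : ℕ) (hn : 1 ≤ n) (x : ℝ)
    (hx : x ∈ Set.Ioo (0:ℝ) 1)
    (ρ₁ ρ₂ : Matrix (Fin n) (Fin n) ℂ) (h1 : IsDensity ρ₁) (h2 : IsDensity ρ₂) :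
    vnEntropy (x • ρ₁ + (1 - x) • ρ₂) - x * vnEntropy ρ₁ - (1 - x) * vnEntropy ρ₂
      ≥ 2 * x ^ 2 * (1 - x) ^ 2 * traceNorm (ρ₁ - ρ₂) ^ 2 := by
  have h := concavity_lower_bound_weak_pinsker_general hx h1 h2
  -- The constants differ by `x (1 - x) / 2 * (1 - 2 x)²`, as `1 - 4 x (1 - x) = (1 - 2 x)²`.
  have hgap : 0 ≤ x * (1 - x) / 2 * (1 - 2 * x) ^ 2 * traceNorm (ρ₁ - ρ₂) ^ 2 := by
    have := mul_pos hx.1 (sub_pos.2 hx.2)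
    positivity
  linarith
end
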